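/- arXiv:math/0611171 — 3 statements merged into one kernel-verified Lean document; each statement's English description precedes it below -/
import Mathlib

section
/- For n ∈ ℕ, for the straight segment γ(t) = t on [-1,1] and z ∈ ℂ \ [-1,1], one has (log((z-1)/(z+1)))^{n+1} = (1/(2πi)) ∫_{-1}^{1} ((log((1-t)/(1+t)) + πi)^{n+1} - (log((1-t)/(1+t)) - πi)^{n+1}) / (t - z) dt, where log((z-1)/(z+1)) denotes the branch of the logarithm of (z-1)/(z+1) on ℂ \ [-1,1] that vanishes at ∞ (i.e., the composition of (z-1)/(z+1) with the principal logarithm, noting (z-1)/(z+1) ∉ (-∞, 0] for z ∉ [-1,1]). -/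
/-!
Put `L = log ((z - 1) / (z + 1))`, so that `|Im L| < π` because `(z - 1) / (z + 1)` avoids
`(-∞, 0]`.

For `n = 0` the jump of the logarithm is the constant `2πi`, and the formula is
`∫ dt / (t - z) = L` (`integral_inv_sub`). For general `n` it is therefore enough to show
`∫ (J(t) - 2πi * L ^ n) / (t - z) dt = 0`, where `J(t)` is the jump of the `(n + 1)`-st power
(`integral_integrand`).

The substitution `t = (1 - e^u) / (1 + e^u)` turns `log ((1 - t) / (1 + t))` into `u`. With
`q(v) = v ^ (n + 1) - v * L ^ n` the integral becomes the difference of the integrals of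
`q(v) * (2 / (1 + z)) * e^v / ((1 - e^v) (e^v - e^L))` over the lines `Im v = π` and `Im v = -π`
(`phi_sub_phi`). In the closed strip `|Im v| ≤ π` the only poles of the second factor are the
simple ones at `v = 0` and `v = L`, and `q` vanishes at both, so this function extends to a
holomorphic function `phi` there. Cauchy's theorem on the rectangles `[-R, R] × [-π, π]` and the
decay of the integrand on the vertical sides (`tendsto_vertical`) give the value zero. The integral
over `[-1, 1]` is the limit of the truncated ones since powers of the logarithm are integrable
(`intervalIntegrable_log_pow`).
-/

open Complex

/-! ### The case of the first power -/

/-- If `(z - t) / (z + 1) = -r` with `r ≥ 0`, then `z = (t - r) / (1 + r)` is a point of `[-1, 1]`.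
This makes `log ((z - t) / (z + 1))` a smooth primitive of `1 / (t - z)` and, for `t = 1`, places
the argument of the logarithm in the theorem off the cut. -/
lemma slit (z : ℂ) (hz : ∀ t : ℝ, t ∈ Set.Icc (-1 : ℝ) 1 → (t : ℂ) ≠ z)
    {t : ℝ} (ht : t ∈ Set.Icc (-1 : ℝ) 1) : (z - t) / (z + 1) ∈ slitPlane := by
  have h1 : z + 1 ≠ 0 := fun h => hz (-1) (by simp) (by push_cast; linear_combination -h)
  rw [Complex.mem_slitPlane_iff_not_le_zero]
  intro hle
  obtain ⟨hre, him⟩ := Complex.le_def.1 hle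
  set r : ℝ := -((z - t) / (z + 1)).re with hr
  have hr0 : 0 ≤ r := by simp only [Complex.zero_re] at hre; linarith
  have hq : (z - t) / (z + 1) = ((-r : ℝ) : ℂ) := by
    apply Complex.ext
    · simp [hr]
    · simpa using him
  rw [div_eq_iff h1] at hq
  have hr1 : 0 < 1 + r := by linarith
  have hr2 : (1 + r : ℂ) ≠ 0 := by exact_mod_cast hr1.ne'
  refine hz ((t - r) / (1 + r)) ⟨?_, ?_⟩ ?_
  · rw [le_div_iff₀ hr1]; linarith [ht.1]
  · rw [div_le_iff₀ hr1]; linarith [ht.2]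
  · push_cast at hq ⊢
    rw [div_eq_iff hr2]
    linear_combination -hq

lemma integral_inv_sub (z : ℂ) (hz : ∀ t : ℝ, t ∈ Set.Icc (-1 : ℝ) 1 → (t : ℂ) ≠ z) :
    ∫ t in (-1 : ℝ)..1, ((t : ℂ) - z)⁻¹ = Complex.log ((z - 1) / (z + 1)) := by
  have h1 : z + 1 ≠ 0 := fun h => hz (-1) (by simp) (by push_cast; linear_combination -h)
  have hI : Set.uIcc (-1 : ℝ) 1 = Set.Icc (-1) 1 := Set.uIcc_of_le (by norm_num)
  rw [intervalIntegral.integral_eq_sub_of_hasDerivAt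
    (f := fun t : ℝ => Complex.log ((z - t) / (z + 1)))]
  · push_cast
    rw [sub_neg_eq_add, div_self h1, Complex.log_one, sub_zero]
  · intro t ht
    rw [hI] at ht
    have h2 : z - t ≠ 0 := sub_ne_zero.2 (hz t ht).symm
    have h3 : (t : ℂ) - z ≠ 0 := sub_ne_zero.2 (hz t ht)
    have h := (((hasDerivAt_id (t : ℂ)).const_sub z).div_const (z + 1)).comp_ofReal.clog_real
      (slit z hz ht)
    refine h.congr_deriv ?_
    simp only [id]
    field_simp
    ring
  · apply ContinuousOn.intervalIntegrable
    rw [hI]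
    exact ContinuousOn.inv₀ (by fun_prop) fun t ht => sub_ne_zero.2 (hz t ht)

/-! ### The holomorphic function on the strip -/

/-- The function `(e^v - e^c) / (v - c)`, completed by `e^c` at `v = c`, where `|Im c| < π`, has no zero in
the strip `|Im v| ≤ π`: the other preimages of `e^c` under `exp` differ from `c` by nonzero multiples of
`2πi`. -/
lemma dslope_exp_ne_zero {c v : ℂ} (hc : |c.im| < Real.pi) (hv : |v.im| ≤ Real.pi) :
    dslope Complex.exp c v ≠ 0 := by
  rcases eq_or_ne v c with rfl | hne
  · simp
  rw [dslope_of_ne _ hne, slope_def_field]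
  refine div_ne_zero (sub_ne_zero.2 fun h => hne ?_) (sub_ne_zero.2 hne)
  obtain ⟨k, hk⟩ := Complex.exp_eq_exp_iff_exists_int.1 h
  have him : v.im = c.im + k * (2 * Real.pi) := by simpa using congrArg Complex.im hk
  have hpi := Real.pi_pos
  rw [abs_lt] at hc
  rw [abs_le] at hv
  have h1 : (k : ℝ) < 1 := by by_contra! h; nlinarith
  have h2 : (-1 : ℝ) < k := by by_contra! h; nlinarith
  have h3 : k = 0 := by
    have : k < 1 := by exact_mod_cast h1
    have : -1 < k := by exact_mod_cast h2
    omega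
  simpa [h3] using hk

/-- The holomorphic extension to `|Im v| ≤ π` of
`(v ^ (n + 1) - v * L ^ n) * (2 / (1 + z)) * e^v / ((1 - e^v) (e^v - e^L))`. The polynomial factor is
`v * (v - L)` times the geometric sum below, and the two linear factors are absorbed into the
difference quotients `dslope` of `exp` at `0` and at `L`. -/
noncomputable def phi (n : ℕ) (z L v : ℂ) : ℂ :=
  -(2 / (1 + z)) * Complex.exp v * (∑ i ∈ Finset.range n, v ^ i * L ^ (n - 1 - i)) *
    (dslope Complex.exp 0 v)⁻¹ * (dslope Complex.exp L v)⁻¹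

lemma phi_eq (n : ℕ) {z L v : ℂ} (hz : 1 + z ≠ 0) (h0 : Complex.exp v ≠ 1)
    (hL : Complex.exp v ≠ Complex.exp L) :
    phi n z L v = (v ^ (n + 1) - v * L ^ n) * (2 / (1 + z)) *
      (Complex.exp v / ((1 - Complex.exp v) * (Complex.exp v - Complex.exp L))) := by
  have hv0 : v ≠ 0 := by rintro rfl; simp at h0
  have hvL : v ≠ L := by rintro rfl; exact hL rfl
  have e1 : v - L ≠ 0 := sub_ne_zero.2 hvL
  have e2 : Complex.exp v - 1 ≠ 0 := sub_ne_zero.2 h0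
  have e2' : 1 - Complex.exp v ≠ 0 := sub_ne_zero.2 h0.symm
  have e3 : Complex.exp v - Complex.exp L ≠ 0 := sub_ne_zero.2 hL
  have hS := geom_sum₂_mul v L n
  rw [← eq_div_iff e1] at hS
  rw [phi, hS, dslope_of_ne _ hv0, dslope_of_ne _ hvL, slope_def_field, slope_def_field,
    Complex.exp_zero, sub_zero]
  field_simp
  ring

lemma phi_differentiableOn (n : ℕ) {z L : ℂ} (hL : |L.im| < Real.pi) :
    DifferentiableOn ℂ (phi n z L) {v | |v.im| ≤ Real.pi} := by
  have hd : ∀ c : ℂ, DifferentiableOn ℂ (dslope Complex.exp c) Set.univ := fun c =>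
    (Complex.differentiableOn_dslope Filter.univ_mem).2 Complex.differentiable_exp.differentiableOn
  have h1 : DifferentiableOn ℂ (fun v => (dslope Complex.exp 0 v)⁻¹) {v | |v.im| ≤ Real.pi} :=
    ((hd 0).mono (Set.subset_univ _)).inv fun v hv =>
      dslope_exp_ne_zero (by simpa using Real.pi_pos) hv
  have h2 : DifferentiableOn ℂ (fun v => (dslope Complex.exp L v)⁻¹) {v | |v.im| ≤ Real.pi} :=
    ((hd L).mono (Set.subset_univ _)).inv fun v hv => dslope_exp_ne_zero hL hv
  unfold phi
  refine DifferentiableOn.mul (DifferentiableOn.mul ?_ h1) h2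
  fun_prop

/-- On the vertical lines `Re v = ±R` one of `1` and `e^v` dominates the other, and likewise for `w`
and `e^v`, so the kernel is `O(e^(-R))` on both lines. -/
lemma kernel_bound {R : ℝ} {w v : ℂ} (hw : w ≠ 0) (h2 : 2 ≤ Real.exp R)
    (hR1 : 2 * ‖w‖ ≤ Real.exp R) (hR2 : 2 * ‖w‖⁻¹ ≤ Real.exp R) (hv : v.re = R ∨ v.re = -R) :
    Complex.exp v ≠ 1 ∧ Complex.exp v ≠ w ∧
      ‖Complex.exp v / ((1 - Complex.exp v) * (Complex.exp v - w))‖ ≤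
        (4 + 4 * ‖w‖⁻¹) * Real.exp (-R) := by
  have hwp : 0 < ‖w‖ := norm_pos_iff.2 hw
  have hE := Real.exp_pos R
  -- Lower bounds `a`, `b` for the two factors of the denominator suffice.
  have key : ∀ a b : ℝ, 0 < a → 0 < b → a ≤ ‖1 - Complex.exp v‖ → b ≤ ‖Complex.exp v - w‖ →
      ‖Complex.exp v‖ / (a * b) ≤ (4 + 4 * ‖w‖⁻¹) * Real.exp (-R) →
      Complex.exp v ≠ 1 ∧ Complex.exp v ≠ w ∧
      ‖Complex.exp v / ((1 - Complex.exp v) * (Complex.exp v - w))‖ ≤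
        (4 + 4 * ‖w‖⁻¹) * Real.exp (-R) := by
    intro a b ha hb h1 h3 h4
    refine ⟨fun h => ?_, fun h => ?_, ?_⟩
    · rw [h] at h1; simp at h1; linarith
    · rw [h] at h3; simp at h3; linarith
    · rw [norm_div, norm_mul]
      refine le_trans ?_ h4
      gcongr
  rcases hv with hv | hv
  · have hn : ‖Complex.exp v‖ = Real.exp R := by rw [Complex.norm_exp, hv]
    refine key (Real.exp R / 2) (Real.exp R / 2) (by positivity) (by positivity) ?_ ?_ ?_
    · have := norm_sub_norm_le (Complex.exp v) 1
      rw [norm_sub_rev, hn, norm_one] at this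
      rw [norm_sub_rev 1]
      rw [norm_sub_rev] at this
      linarith
    · have := norm_sub_norm_le (Complex.exp v) w
      rw [hn] at this
      linarith
    · rw [hn, Real.exp_neg]
      have : Real.exp R / (Real.exp R / 2 * (Real.exp R / 2)) = 4 * (Real.exp R)⁻¹ := by
        field_simp; norm_num
      rw [this]
      gcongr
      have : 0 < ‖w‖⁻¹ := by positivity
      linarith
  · have hn : ‖Complex.exp v‖ = (Real.exp R)⁻¹ := by rw [Complex.norm_exp, hv, Real.exp_neg]
    have h5 : (Real.exp R)⁻¹ ≤ 1 / 2 := by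
      rw [inv_le_comm₀ hE (by norm_num)]; linarith
    have h6 : (Real.exp R)⁻¹ ≤ ‖w‖ / 2 := by
      rw [inv_le_comm₀ hE (by positivity), inv_div]
      linarith [div_eq_mul_inv 2 ‖w‖]
    refine key (1 / 2) (‖w‖ / 2) (by positivity) (by positivity) ?_ ?_ ?_
    · have := norm_sub_norm_le 1 (Complex.exp v)
      rw [hn, norm_one] at this
      linarith
    · have := norm_sub_norm_le w (Complex.exp v)
      rw [hn, norm_sub_rev] at this
      linarith
    · rw [hn, Real.exp_neg]
      have : (Real.exp R)⁻¹ / (1 / 2 * (‖w‖ / 2)) = 4 * ‖w‖⁻¹ * (Real.exp R)⁻¹ := by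
        field_simp; norm_num
      rw [this]
      gcongr
      linarith

/-- The contribution of each vertical side (`σ = 1` the right one, `σ = -1` the left one) of the
rectangle `[-R, R] × [-π, π]` tends to zero: a polynomial in `R` times `e^(-R)`. -/
lemma tendsto_vertical (n : ℕ) {z L : ℂ} (hz : 1 + z ≠ 0) (σ : ℝ) (hσ : σ = 1 ∨ σ = -1) :
    Filter.Tendsto
      (fun R : ℝ => ∫ y in (-Real.pi)..Real.pi, phi n z L (((σ * R : ℝ) : ℂ) + y * Complex.I))
      Filter.atTop (nhds 0) := by
  set w := Complex.exp L with hw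
  have hw0 : w ≠ 0 := Complex.exp_ne_zero L
  set B : ℝ → ℝ := fun R => ((R + Real.pi) ^ (n + 1) + (R + Real.pi) * ‖L‖ ^ n) * ‖2 / (1 + z)‖ *
    ((4 + 4 * ‖w‖⁻¹) * Real.exp (-R)) with hB
  have hBlim : Filter.Tendsto B Filter.atTop (nhds 0) := by
    have ha : Filter.Tendsto (fun R : ℝ => R + Real.pi) Filter.atTop Filter.atTop :=
      Filter.tendsto_atTop_add_const_right _ _ Filter.tendsto_id
    have h1 := (Real.tendsto_pow_mul_exp_neg_atTop_nhds_zero (n + 1)).comp ha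
    have h2 := (Real.tendsto_pow_mul_exp_neg_atTop_nhds_zero 1).comp ha
    have h3 := (h1.add (h2.mul_const (‖L‖ ^ n))).mul_const
      (‖2 / (1 + z)‖ * (4 + 4 * ‖w‖⁻¹) * Real.exp Real.pi)
    simp only [zero_mul, add_zero] at h3
    refine h3.congr fun R => ?_
    have : Real.exp (-R) = Real.exp (-(R + Real.pi)) * Real.exp Real.pi := by
      rw [← Real.exp_add]; ring_nf
    simp only [hB, Function.comp, this]
    ring
  have hlim2 := hBlim.mul_const |Real.pi - -Real.pi|
  rw [zero_mul] at hlim2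
  refine squeeze_zero_norm' ?_ hlim2
  filter_upwards [Filter.eventually_ge_atTop 0,
    Real.tendsto_exp_atTop.eventually_ge_atTop 2,
    Real.tendsto_exp_atTop.eventually_ge_atTop (2 * ‖w‖),
    Real.tendsto_exp_atTop.eventually_ge_atTop (2 * ‖w‖⁻¹)] with R hR0 hR1 hR2 hR3
  refine intervalIntegral.norm_integral_le_of_norm_le_const fun y hy => ?_
  rw [Set.uIoc_of_le (by linarith [Real.pi_pos])] at hy
  set v : ℂ := ((σ * R : ℝ) : ℂ) + y * Complex.I with hv
  have hre : v.re = R ∨ v.re = -R := by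
    rcases hσ with rfl | rfl <;> simp [hv]
  obtain ⟨k1, k2, k3⟩ := kernel_bound hw0 hR1 hR2 hR3 hre
  have hvn : ‖v‖ ≤ R + Real.pi := by
    refine (norm_add_le _ _).trans ?_
    have e1 : ‖((σ * R : ℝ) : ℂ)‖ = R := by
      rcases hσ with rfl | rfl <;> simp [abs_of_nonneg hR0]
    have e2 : ‖(y : ℂ) * Complex.I‖ ≤ Real.pi := by
      simpa using abs_le.2 ⟨hy.1.le, hy.2⟩
    linarith
  rw [phi_eq n hz k1 k2, norm_mul, norm_mul]
  simp only [hB]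
  gcongr
  refine (norm_sub_le _ _).trans ?_
  rw [norm_mul, norm_pow, norm_pow]
  gcongr

/-! ### The substitution and the limit -/

/-- Since `x ^ k ≤ k! * e^x`, every power of the logarithm is dominated by a multiple of
`(1 + t) ^ (-1/2) + (1 - t) ^ (-1/2)`. -/
lemma intervalIntegrable_log_pow (k : ℕ) (c : ℂ) :
    IntervalIntegrable (fun t : ℝ => (Complex.log (((1 : ℝ) - t) / ((1 : ℝ) + t)) + c) ^ k)
      MeasureTheory.volume (-1) 1 := by
  have i1 : IntervalIntegrable (fun t : ℝ => (1 + t) ^ (-(1 / 2) : ℝ))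
      MeasureTheory.volume (-1) 1 := by
    have := (intervalIntegral.intervalIntegrable_rpow' (a := 0) (b := 2)
      (r := -(1 / 2)) (by norm_num)).comp_add_left 1
    norm_num at this ⊢
    exact this
  have i2 : IntervalIntegrable (fun t : ℝ => (1 - t) ^ (-(1 / 2) : ℝ))
      MeasureTheory.volume (-1) 1 := by
    have := ((intervalIntegral.intervalIntegrable_rpow' (a := 0) (b := 2)
      (r := -(1 / 2)) (by norm_num)).comp_sub_left 1).symm
    norm_num at this ⊢
    exact this
  have i3 := (i1.add i2).const_mul (2 ^ k * k.factorial * Real.exp (‖c‖ / 2) * Real.exp 1)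
  refine i3.mono_fun' (Measurable.aestronglyMeasurable (by fun_prop)) ?_
  have hE : ∀ᵐ t : ℝ ∂MeasureTheory.volume, t ≠ 1 :=
    MeasureTheory.Measure.ae_ne MeasureTheory.volume 1
  rw [Set.uIoc_of_le (by norm_num)]
  filter_upwards [MeasureTheory.ae_restrict_of_ae hE,
    MeasureTheory.ae_restrict_mem measurableSet_Ioc] with t ht1 ht
  have hp : 0 < 1 + t := by linarith [ht.1]
  have hm : 0 < 1 - t := by
    have := lt_of_le_of_ne ht.2 ht1
    linarith
  set l : ℝ := Real.log ((1 - t) / (1 + t)) with hl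
  have hlog : Complex.log (((1 : ℝ) - t) / ((1 : ℝ) + t)) = (l : ℂ) := by
    rw [hl, Complex.ofReal_log (by positivity)]
    push_cast
    rfl
  have hl2 : l = Real.log (1 - t) - Real.log (1 + t) := Real.log_div hm.ne' hp.ne'
  have b1 : Real.log (1 - t) ≤ 1 := by linarith [Real.log_le_sub_one_of_pos hm, ht.1]
  have b2 : Real.log (1 + t) ≤ 1 := by linarith [Real.log_le_sub_one_of_pos hp, ht.2]
  have hexp : Real.exp (|l| / 2) ≤
      Real.exp 1 * ((1 + t) ^ (-(1 / 2) : ℝ) + (1 - t) ^ (-(1 / 2) : ℝ)) := by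
    rw [Real.rpow_def_of_pos hp, Real.rpow_def_of_pos hm, mul_add, ← Real.exp_add, ← Real.exp_add]
    rcases abs_cases l with ⟨h, -⟩ | ⟨h, -⟩
    · refine le_trans (Real.exp_le_exp.2 ?_) (le_add_of_nonneg_right (Real.exp_pos _).le)
      linarith
    · refine le_trans (Real.exp_le_exp.2 ?_) (le_add_of_nonneg_left (Real.exp_pos _).le)
      linarith
  have hfac := Real.pow_div_factorial_le_exp ((|l| + ‖c‖) / 2) (by positivity) k
  rw [div_le_iff₀ (by positivity), div_pow, div_le_iff₀ (by positivity)] at hfac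
  rw [hlog, norm_pow]
  calc ‖(l : ℂ) + c‖ ^ k ≤ (|l| + ‖c‖) ^ k := by
        gcongr
        refine (norm_add_le _ _).trans (by simp)
    _ ≤ 2 ^ k * k.factorial * Real.exp (‖c‖ / 2) * Real.exp (|l| / 2) := by
        refine hfac.trans (le_of_eq ?_)
        rw [add_div, Real.exp_add]; ring
    _ ≤ _ := by
        rw [mul_assoc (2 ^ k * _ * _) (Real.exp 1)]
        gcongr

/-- The difference between the integrand of the theorem and `2πi * L ^ n / (t - z)`. -/
noncomputable def integrand (n : ℕ) (z L : ℂ) (t : ℝ) : ℂ :=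
  (((Complex.log (((1 : ℝ) - t) / ((1 : ℝ) + t)) + Real.pi * Complex.I) ^ (n + 1) -
    (Complex.log (((1 : ℝ) - t) / ((1 : ℝ) + t)) - Real.pi * Complex.I) ^ (n + 1)) -
    2 * Real.pi * Complex.I * L ^ n) / ((t : ℂ) - z)

lemma intervalIntegrable_div (n : ℕ) (z : ℂ)
    (hz : ∀ t : ℝ, t ∈ Set.Icc (-1 : ℝ) 1 → (t : ℂ) ≠ z) :
    IntervalIntegrable (fun t : ℝ =>
      ((Complex.log (((1 : ℝ) - t) / ((1 : ℝ) + t)) + Real.pi * Complex.I) ^ (n + 1) -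
        (Complex.log (((1 : ℝ) - t) / ((1 : ℝ) + t)) - Real.pi * Complex.I) ^ (n + 1)) /
          ((t : ℂ) - z)) MeasureTheory.volume (-1) 1 := by
  have h1 := intervalIntegrable_log_pow (n + 1) (Real.pi * Complex.I)
  have h2 := intervalIntegrable_log_pow (n + 1) (-(Real.pi * Complex.I))
  simp only [div_eq_mul_inv _ ((_ : ℂ) - z)]
  simp only [← sub_eq_add_neg] at h2
  refine (h1.sub h2).mul_continuousOn (ContinuousOn.inv₀ (by fun_prop) fun t ht => ?_)
  rw [Set.uIcc_of_le (by norm_num)] at ht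
  exact sub_ne_zero.2 (hz t ht)

lemma integrand_eq (n : ℕ) (z L : ℂ) : integrand n z L = fun t : ℝ =>
      ((Complex.log (((1 : ℝ) - t) / ((1 : ℝ) + t)) + Real.pi * Complex.I) ^ (n + 1) -
        (Complex.log (((1 : ℝ) - t) / ((1 : ℝ) + t)) - Real.pi * Complex.I) ^ (n + 1)) /
          ((t : ℂ) - z) - 2 * Real.pi * Complex.I * L ^ n * ((t : ℂ) - z)⁻¹ := by
  funext t
  rw [integrand, sub_div, div_eq_mul_inv (2 * Real.pi * Complex.I * L ^ n)]

lemma intervalIntegrable_cauchy (c z : ℂ) (hz : ∀ t : ℝ, t ∈ Set.Icc (-1 : ℝ) 1 → (t : ℂ) ≠ z) :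
    IntervalIntegrable (fun t : ℝ => c * ((t : ℂ) - z)⁻¹) MeasureTheory.volume (-1) 1 := by
  refine (ContinuousOn.intervalIntegrable ?_).const_mul c
  rw [Set.uIcc_of_le (by norm_num)]
  exact ContinuousOn.inv₀ (by fun_prop) fun t ht => sub_ne_zero.2 (hz t ht)

lemma continuousOn_integrand (n : ℕ) (z L : ℂ)
    (hz : ∀ t : ℝ, t ∈ Set.Icc (-1 : ℝ) 1 → (t : ℂ) ≠ z) :
    ContinuousOn (integrand n z L) (Set.Ioo (-1) 1) := by
  have hlog : ContinuousOn (fun t : ℝ => Complex.log (((1 : ℝ) - t) / ((1 : ℝ) + t)))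
      (Set.Ioo (-1) 1) := by
    refine ContinuousOn.clog (ContinuousOn.div (by fun_prop) (by fun_prop) fun t ht => ?_)
      fun t ht => ?_
    · have : 1 + t ≠ 0 := by linarith [ht.1]
      exact_mod_cast this
    · have : 0 < (1 - t) / (1 + t) := div_pos (by linarith [ht.2]) (by linarith [ht.1])
      have := Complex.ofReal_mem_slitPlane.2 this
      push_cast at this ⊢
      exact this
  unfold integrand
  refine ContinuousOn.div (by fun_prop) (by fun_prop) fun t ht => ?_
  exact sub_ne_zero.2 (hz t ⟨ht.1.le, ht.2.le⟩)

/-- The change of variables `t = (1 - e^u) / (1 + e^u)`, a decreasing map of `ℝ` onto `(-1, 1)`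
whose inverse is `u = log ((1 - t) / (1 + t))`. -/
noncomputable def tau (u : ℝ) : ℝ := (1 - Real.exp u) / (1 + Real.exp u)

lemma hasDerivAt_tau (u : ℝ) :
    HasDerivAt tau (-2 * Real.exp u / (1 + Real.exp u) ^ 2) u := by
  have h : 1 + Real.exp u ≠ 0 := by positivity
  refine (((Real.hasDerivAt_exp u).const_sub 1).div
    ((Real.hasDerivAt_exp u).const_add 1) h).congr_deriv ?_
  ring

lemma tau_mem (u : ℝ) : tau u ∈ Set.Ioo (-1 : ℝ) 1 := by
  have h := Real.exp_pos u
  constructor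
  · rw [tau, lt_div_iff₀ (by positivity)]; linarith
  · rw [tau, div_lt_iff₀ (by positivity)]; linarith

/-- On both lines `v = u ± πi` one has `e^v = -e^u`, so the kernel takes the same value
`tau' u / (tau u - z)` on both, and only the polynomial factor jumps. -/
lemma phi_sub_phi (n : ℕ) (z L : ℂ) (hz : ∀ t : ℝ, t ∈ Set.Icc (-1 : ℝ) 1 → (t : ℂ) ≠ z)
    (hL : Complex.exp L = (z - 1) / (z + 1)) (u : ℝ) :
    phi n z L (u + Real.pi * Complex.I) - phi n z L (u - Real.pi * Complex.I) =
      (-2 * Real.exp u / (1 + Real.exp u) ^ 2) • integrand n z L (tau u) := by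
  have h1 : 1 + z ≠ 0 := fun h => hz (-1) (by simp) (by push_cast; linear_combination -h)
  have h1' : z + 1 ≠ 0 := by rwa [add_comm]
  have hlog : Complex.log (((1 : ℝ) - (tau u : ℝ)) / ((1 : ℝ) + (tau u : ℝ))) = u := by
    have : (1 - tau u) / (1 + tau u) = Real.exp u := by
      have h : 1 + Real.exp u ≠ 0 := by positivity
      rw [tau]; field_simp; ring
    rw [← Complex.ofReal_sub, ← Complex.ofReal_add, ← Complex.ofReal_div, this,
      ← Complex.ofReal_log (Real.exp_pos u).le, Real.log_exp]
  have e1 : Complex.exp (u + Real.pi * Complex.I) = -(Real.exp u : ℂ) := by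
    rw [Complex.exp_add, Complex.exp_pi_mul_I]; push_cast; ring
  have e2 : Complex.exp (u - Real.pi * Complex.I) = -(Real.exp u : ℂ) := by
    rw [Complex.exp_sub, Complex.exp_pi_mul_I]; push_cast; ring
  have h2 : -(Real.exp u : ℂ) ≠ 1 := by
    have : -Real.exp u ≠ 1 := by linarith [Real.exp_pos u]
    exact_mod_cast this
  have hz2 : (tau u : ℂ) - z ≠ 0 :=
    sub_ne_zero.2 (hz _ ⟨(tau_mem u).1.le, (tau_mem u).2.le⟩)
  have h4 : (1 + Real.exp u : ℂ) ≠ 0 := by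
    have : 1 + Real.exp u ≠ 0 := by positivity
    exact_mod_cast this
  have htau : (tau u : ℂ) = (1 - Real.exp u) / (1 + Real.exp u) := by
    rw [tau]; push_cast; rfl
  have hrel : (-(Real.exp u : ℂ) - Complex.exp L) * (1 + z) =
      (1 + Real.exp u) * (tau u - z) := by
    rw [hL, htau]; field_simp; ring
  have h3 : -(Real.exp u : ℂ) ≠ Complex.exp L := by
    intro h
    rw [h, sub_self, zero_mul] at hrel
    exact mul_ne_zero h4 hz2 hrel.symm
  have h3' := sub_ne_zero.2 h3
  rw [phi_eq n h1 (by rwa [e1]) (by rwa [e1]), phi_eq n h1 (by rwa [e2]) (by rwa [e2]), e1, e2,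
    integrand, hlog, Complex.real_smul]
  have hk : (2 / (1 + z)) * (-(Real.exp u : ℂ) /
      ((1 - -(Real.exp u : ℂ)) * (-(Real.exp u : ℂ) - Complex.exp L))) =
      ((-2 * Real.exp u / (1 + Real.exp u) ^ 2 : ℝ) : ℂ) / (tau u - z) := by
    rw [sub_neg_eq_add, div_mul_div_comm,
      show (1 + z) * ((1 + (Real.exp u : ℂ)) * (-(Real.exp u : ℂ) - Complex.exp L)) =
        (1 + Real.exp u) * ((-(Real.exp u : ℂ) - Complex.exp L) * (1 + z)) by ring, hrel]
    push_cast at h4 ⊢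
    field_simp
  rw [mul_assoc, mul_assoc, hk]
  ring

lemma tendsto_tau_atTop : Filter.Tendsto tau Filter.atTop (nhds (-1)) := by
  have h : Filter.Tendsto (fun u : ℝ => -1 + 2 * (1 + Real.exp u)⁻¹) Filter.atTop
      (nhds (-1 + 2 * 0)) :=
    ((tendsto_inv_atTop_zero.comp
      (Filter.tendsto_atTop_add_const_left _ 1 Real.tendsto_exp_atTop)).const_mul 2).const_add (-1)
  rw [mul_zero, add_zero] at h
  refine h.congr fun u => ?_
  have h : 1 + Real.exp u ≠ 0 := by positivity
  rw [tau]; field_simp; ring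

lemma tau_neg (u : ℝ) : tau (-u) = -tau u := by
  have h : 1 + Real.exp u ≠ 0 := by positivity
  have h' := Real.exp_pos u
  rw [tau, tau, Real.exp_neg]
  field_simp
  ring

lemma integral_integrand (n : ℕ) (z L : ℂ)
    (hz : ∀ t : ℝ, t ∈ Set.Icc (-1 : ℝ) 1 → (t : ℂ) ≠ z)
    (hL : Complex.exp L = (z - 1) / (z + 1)) (hLim : |L.im| < Real.pi) :
    ∫ t in (-1 : ℝ)..1, integrand n z L t = 0 := by
  have h1 : 1 + z ≠ 0 := fun h => hz (-1) (by simp) (by push_cast; linear_combination -h)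
  have hpi := Real.pi_pos
  have hint : IntervalIntegrable (integrand n z L) MeasureTheory.volume (-1) 1 := by
    rw [integrand_eq]
    exact (intervalIntegrable_div n z hz).sub (intervalIntegrable_cauchy _ z hz)
  have hline : ∀ c : ℝ, |c| ≤ Real.pi → ∀ R : ℝ,
      IntervalIntegrable (fun u : ℝ => phi n z L (u + c * Complex.I))
        MeasureTheory.volume (-R) R := by
    intro c hc R
    refine Continuous.intervalIntegrable ?_ _ _
    refine (phi_differentiableOn n hLim).continuousOn.comp_continuous (by fun_prop) fun u => ?_
    simpa using hc
  -- Cauchy's theorem on the rectangle, with the horizontal sides rewritten as an integral in `t`.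
  have hrect : ∀ R : ℝ, ∫ t in tau (-R)..tau R, integrand n z L t =
      Complex.I * (∫ y in (-Real.pi)..Real.pi, phi n z L (((1 * R : ℝ) : ℂ) + y * Complex.I)) -
      Complex.I * (∫ y in (-Real.pi)..Real.pi, phi n z L (((-1 * R : ℝ) : ℂ) + y * Complex.I)) := by
    intro R
    have hc := Complex.integral_boundary_rect_eq_zero_of_differentiableOn (phi n z L)
      (⟨-R, -Real.pi⟩ : ℂ) (⟨R, Real.pi⟩ : ℂ) ((phi_differentiableOn n hLim).mono fun v hv => by
        have := (Complex.mem_reProdIm.1 hv).2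
        rw [Set.uIcc_of_le (by simp; linarith)] at this
        exact abs_le.2 this)
    have hs := intervalIntegral.integral_deriv_smul_comp'' (a := -R) (b := R) (f := tau)
      (f' := fun u => -2 * Real.exp u / (1 + Real.exp u) ^ 2) (g := integrand n z L)
      (fun u _ => (hasDerivAt_tau u).continuousAt.continuousWithinAt)
      (fun u _ => (hasDerivAt_tau u).hasDerivWithinAt)
      (Continuous.continuousOn (Continuous.div (by fun_prop) (by fun_prop)
        fun u => by positivity))
      ((continuousOn_integrand n z L hz).mono (by rintro _ ⟨u, -, rfl⟩; exact tau_mem u))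
    rw [← hs]
    simp only [Function.comp, ← phi_sub_phi n z L hz hL]
    have ha := hline Real.pi (by rw [abs_of_pos hpi]) R
    have hb := hline (-Real.pi) (by rw [abs_neg, abs_of_pos hpi]) R
    have hsub := intervalIntegral.integral_sub ha hb
    simp only [Complex.ofReal_neg, neg_mul, ← sub_eq_add_neg, smul_eq_mul, one_mul] at hc hsub ⊢
    rw [hsub]
    linear_combination -hc
  have hlim0 : Filter.Tendsto (fun R => ∫ t in tau (-R)..tau R, integrand n z L t)
      Filter.atTop (nhds 0) := by
    simp only [hrect]
    simpa using ((tendsto_vertical n (L := L) h1 1 (Or.inl rfl)).const_mul Complex.I).sub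
      ((tendsto_vertical n (L := L) h1 (-1) (Or.inr rfl)).const_mul Complex.I)
  -- The primitive is continuous up to `±1`, so the truncated integrals converge to the full one;
  -- `tau` reverses orientation, whence the final sign.
  have hF := intervalIntegral.continuousOn_primitive_interval' (a := 0) hint
    (by rw [Set.uIcc_of_le (by norm_num)]; norm_num)
  rw [Set.uIcc_of_le (by norm_num)] at hF
  have hsub : ∀ x ∈ Set.Icc (-1 : ℝ) 1,
      IntervalIntegrable (integrand n z L) MeasureTheory.volume 0 x := fun x hx =>
    hint.mono_set (Set.uIcc_subset_uIcc (by rw [Set.uIcc_of_le (by norm_num)]; norm_num)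
      (by rwa [Set.uIcc_of_le (by norm_num)]))
  have hm : ∀ u, tau u ∈ Set.Icc (-1 : ℝ) 1 := fun u => ⟨(tau_mem u).1.le, (tau_mem u).2.le⟩
  have hl1 : Filter.Tendsto (fun R => tau (-R)) Filter.atTop (nhds 1) := by
    simp only [tau_neg]
    simpa using tendsto_tau_atTop.neg
  have t1 := (hF (-1) (by norm_num)).tendsto.comp
    (tendsto_nhdsWithin_iff.2 ⟨tendsto_tau_atTop, Filter.Eventually.of_forall hm⟩)
  have t2 := (hF 1 (by norm_num)).tendsto.comp
    (tendsto_nhdsWithin_iff.2 ⟨hl1, Filter.Eventually.of_forall fun R => hm (-R)⟩)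
  have t3 := t1.sub t2
  rw [intervalIntegral.integral_interval_sub_left (hsub _ (by norm_num)) (hsub _ (by norm_num))]
    at t3
  have t4 := tendsto_nhds_unique (t3.congr fun R => by
    simp only [Function.comp]
    rw [intervalIntegral.integral_interval_sub_left (hsub _ (hm _)) (hsub _ (hm _))]) hlim0
  rw [intervalIntegral.integral_symm, t4, neg_zero]

theorem stmt_7 (n : ℕ) (z : ℂ) (hz : ∀ t : ℝ, t ∈ Set.Icc (-1 : ℝ) 1 → (t : ℂ) ≠ z) :
    (Complex.log ((z - 1) / (z + 1))) ^ (n + 1) =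
      (1 / (2 * Real.pi * Complex.I)) *
        ∫ t in (-1 : ℝ)..1,
          ((Complex.log (((1 : ℝ) - t) / ((1 : ℝ) + t)) + Real.pi * Complex.I) ^ (n + 1) -
            (Complex.log (((1 : ℝ) - t) / ((1 : ℝ) + t)) - Real.pi * Complex.I) ^ (n + 1)) /
              ((t : ℂ) - z) := by
  have hs := slit z hz (t := 1) (by norm_num)
  rw [Complex.ofReal_one] at hs
  set L := Complex.log ((z - 1) / (z + 1)) with hL
  have hexp : Complex.exp L = (z - 1) / (z + 1) := Complex.exp_log (Complex.slitPlane_ne_zero hs)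
  have hLim : |L.im| < Real.pi := by
    rw [hL, Complex.log_im, abs_lt]
    exact ⟨Complex.neg_pi_lt_arg _,
      lt_of_le_of_ne (Complex.arg_le_pi _) (Complex.mem_slitPlane_iff_arg.1 hs).1⟩
  have h := integral_integrand n z L hz hexp hLim
  rw [integrand_eq, intervalIntegral.integral_sub (intervalIntegrable_div n z hz)
    (intervalIntegrable_cauchy _ z hz), intervalIntegral.integral_const_mul,
    integral_inv_sub z hz, ← hL, sub_eq_zero] at h
  rw [h]
  have hpi : (Real.pi : ℂ) ≠ 0 := by exact_mod_cast Real.pi_ne_zero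
  field_simp
  exact pow_succ L n
end

section
/- For α ∈ ℝ with |α| < 1 and z ∈ ℂ \ [-1,1], one has ((z-1)/(z+1))^{α} = 1 + (sin(απ)/π) ∫_{-1}^{1} ((1-t)/(1+t))^{α} / (t - z) dt, where ((z-1)/(z+1))^{α} = exp(α·log((z-1)/(z+1))) with the branch of log that vanishes as z → ∞ (the principal logarithm applied to (z-1)/(z+1), which lies in ℂ \ (-∞,0] for z ∉ [-1,1]). -/
/-!
Write `ρ(t) = ((1 - t) / (1 + t)) ^ α` and `c = sin (α π) / π`. Instead of deforming contours, the
identity is transported along the ray from `∞` to `z`, parametrised as `z / s` with `s ∈ [0, 1]`;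
the complement of `[-1, 1]` is stable under dilations `z ↦ z / s`, so the ray stays in the domain.
In this parameter the two sides become

* `g(s) = 1 + c ∫ ρ(t) · s / (s t - z) dt`, with `g(0) = 1`,
* `w(s) ^ α` with `w(s) = (z - s) / (z + s)`, which lies in the slit plane, and `w(0) = 1`.

Both satisfy the same linear equation `(z² - s²) y' = -2 α z y`. For `w ^ α` this is immediate; for
`g` one differentiates under the integral (`hasDerivAt_cauchy`), expands
`z² - s² = (s t - z)² - 2 s t (s t - z) - s² (1 - t²)`, and uses that the total derivative of
`(1 - t²) ρ(t) / (s t - z)` integrates to zero (`weight_ibp`). This gives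
`(z² - s²) g' = -z c (∫ ρ + 2 α ∫ ρ s / (s t - z))` (`cauchy_ode`), and the Beta integral together
with Euler's reflection formula gives `c ∫ ρ = 2 α` (`weight_integral`). Hence `g · w ^ (-α)` has
zero derivative on `[0, 1]` and equals `1` at `s = 0`, so it equals `1` at `s = 1`.
-/

open MeasureTheory

/-- Under `x = (t + 1) / 2`, the Beta integrand with parameters `1 - α`, `1 + α` becomes the weight
`((1 - t) / (1 + t)) ^ α`. -/
lemma weight_eq (α t : ℝ) (ht : t ∈ Set.uIoo (-1 : ℝ) 1) :
    (((t / 2 + 1 / 2 : ℝ) : ℂ)) ^ ((1 - α : ℂ) - 1) * (1 - ((t / 2 + 1 / 2 : ℝ) : ℂ)) ^ ((1 + α : ℂ) - 1)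
    = (((((1 - t) / (1 + t)) ^ α : ℝ)) : ℂ) := by
  rw [Set.uIoo_of_le (by norm_num)] at ht
  obtain ⟨h1, h2⟩ := ht
  have ha : 0 < t / 2 + 1 / 2 := by linarith
  have hb : 0 < 1 - (t / 2 + 1 / 2) := by linarith
  have e1 : ((1 - α : ℂ) - 1) = ((-α : ℝ) : ℂ) := by push_cast; ring
  have e2 : ((1 + α : ℂ) - 1) = (α : ℂ) := by ring
  have e3 : (1 - ((t / 2 + 1 / 2 : ℝ) : ℂ)) = ((1 - (t / 2 + 1 / 2) : ℝ) : ℂ) := by push_cast; ring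
  rw [e1, e2, e3, ← Complex.ofReal_cpow ha.le, ← Complex.ofReal_cpow hb.le, ← Complex.ofReal_mul,
    Real.rpow_neg ha.le, inv_mul_eq_div, ← Real.div_rpow hb.le ha.le]
  congr 2
  have : 1 + t ≠ 0 := by linarith
  rw [show t / 2 + 1 / 2 = (1 + t) / 2 by ring]
  field_simp
  ring

lemma weight_integrable (α : ℝ) (hα : |α| < 1) :
    IntervalIntegrable (fun t : ℝ => (((((1 - t) / (1 + t)) ^ α : ℝ)) : ℂ)) volume (-1) 1 := by
  obtain ⟨h1, h2⟩ := abs_lt.mp hα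
  have h := Complex.betaIntegral_convergent (u := 1 - α) (v := 1 + α)
    (by simp; linarith) (by simp; linarith)
  have h' := (h.comp_mul_right (c := 1 / 2) (by simp) (by simp)).comp_add_right 1 (by simp)
  norm_num at h'
  refine IntervalIntegrable.congr_uIoo h' fun t ht => ?_
  rw [← weight_eq α t ht]
  push_cast
  ring_nf

/-- The Beta integral `∫ ρ = 2 Γ(1 - α) Γ(1 + α) = 2 π α / sin (π α)`, multiplied by `sin (α π) / π`
so that it also holds at `α = 0`. -/
lemma weight_integral (α : ℝ) (hα : |α| < 1) :
    ((Real.sin (α * Real.pi) / Real.pi : ℝ) : ℂ) *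
      ∫ t in (-1 : ℝ)..1, (((((1 - t) / (1 + t)) ^ α : ℝ)) : ℂ) = 2 * α := by
  rcases eq_or_ne α 0 with rfl | h0
  · simp
  obtain ⟨h1, h2⟩ := abs_lt.mp hα
  have hπ : (Real.pi : ℂ) ≠ 0 := by exact_mod_cast Real.pi_ne_zero
  have hsin : Real.sin (α * Real.pi) ≠ 0 := by
    rw [Ne, Real.sin_eq_zero_iff_of_lt_of_lt (by nlinarith [Real.pi_pos])
      (by nlinarith [Real.pi_pos])]
    exact mul_ne_zero h0 Real.pi_ne_zero
  have hcov : ∫ t in (-1 : ℝ)..1, (((((1 - t) / (1 + t)) ^ α : ℝ)) : ℂ) =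
      2 * Complex.betaIntegral (1 - α) (1 + α) := by
    rw [← intervalIntegral.integral_congr_uIoo (fun t ht => weight_eq α t ht),
      intervalIntegral.integral_comp_div_add
        (fun x : ℝ => (x : ℂ) ^ ((1 - α : ℂ) - 1) * (1 - (x : ℂ)) ^ ((1 + α : ℂ) - 1)) two_ne_zero]
    norm_num [Complex.betaIntegral]
  have hB := Complex.Gamma_mul_Gamma_eq_betaIntegral (s := 1 - α) (t := 1 + α)
    (by simp; linarith) (by simp; linarith)
  rw [show (1 - α + (1 + α) : ℂ) = 1 + 1 by ring, Complex.Gamma_add_one 1 one_ne_zero,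
    Complex.Gamma_one, add_comm (1 : ℂ) α, Complex.Gamma_add_one _ (by exact_mod_cast h0)] at hB
  have hR := Complex.Gamma_mul_Gamma_one_sub α
  rw [hcov, add_comm (1 : ℂ) α]
  have hs : Complex.sin (α * Real.pi) ≠ 0 := by exact_mod_cast hsin
  have : Complex.betaIntegral (1 - α) (α + 1) = α * (Real.pi / Complex.sin (α * Real.pi)) := by
    rw [mul_comm (α : ℂ) (Real.pi : ℂ), ← hR]
    linear_combination -hB
  rw [this]
  push_cast
  field_simp

/-- The integrand is the derivative of `(1 - t) ^ (1 + α) (1 + t) ^ (1 - α) / (s t - z)`, which vanishes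
at `t = ±1` because `|α| < 1`. -/
lemma weight_ibp (α : ℝ) (hα : |α| < 1) (z : ℂ) (s : ℝ)
    (hs : ∀ t ∈ Set.Icc (-1 : ℝ) 1, (s * t - z : ℂ) ≠ 0) :
    ∫ t in (-1 : ℝ)..1, (((((1 - t) / (1 + t)) ^ α : ℝ)) : ℂ) *
      (-(2 * t + 2 * α) / (s * t - z) - s * (1 - t ^ 2) / (s * t - z) ^ 2) = 0 := by
  obtain ⟨h1, h2⟩ := abs_lt.mp hα
  have key := intervalIntegral.integral_eq_sub_of_hasDerivAt_of_le (a := -1) (b := 1)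
    (f := fun t : ℝ => (((1 - t) ^ (1 + α) * (1 + t) ^ (1 - α) : ℝ) : ℂ) / (s * t - z))
    (f' := fun t : ℝ => (((((1 - t) / (1 + t)) ^ α : ℝ)) : ℂ) *
      (-(2 * t + 2 * α) / (s * t - z) - s * (1 - t ^ 2) / (s * t - z) ^ 2))
    (by norm_num) ?_ ?_ ?_
  · rw [key]
    simp [Real.zero_rpow (show 1 + α ≠ 0 by linarith), Real.zero_rpow (show 1 - α ≠ 0 by linarith)]
  · refine ContinuousOn.div ?_ (by fun_prop) hs
    refine (Complex.continuous_ofReal.comp ?_).continuousOn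
    exact ((Real.continuous_rpow_const (by linarith)).comp
      (by fun_prop : Continuous fun t : ℝ => 1 - t)).mul
      ((Real.continuous_rpow_const (by linarith)).comp
        (by fun_prop : Continuous fun t : ℝ => 1 + t))
  · intro t ht
    obtain ⟨ht1, ht2⟩ := ht
    have hp : 0 < 1 - t := by linarith
    have hq : 0 < 1 + t := by linarith
    have hd := hs t ⟨ht1.le, ht2.le⟩
    have hA := ((hasDerivAt_id t).const_sub 1).rpow_const (p := 1 + α) (Or.inl hp.ne')
    have hB := ((hasDerivAt_id t).const_add 1).rpow_const (p := 1 - α) (Or.inl hq.ne')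
    have hC : HasDerivAt (fun t : ℝ => (s * t - z : ℂ)) s t := by
      simpa using ((hasDerivAt_id t).ofReal_comp.const_mul (s : ℂ)).sub_const z
    refine ((hA.mul hB).ofReal_comp.div hC hd).congr_deriv ?_
    have e1 : (1 - t) ^ (1 + α) = (1 - t) * (1 - t) ^ α := by
      rw [Real.rpow_add hp, Real.rpow_one]
    have e2 : (1 - t) ^ (1 + α - 1) = (1 - t) ^ α := by congr 1; ring
    have e3 : (1 + t) ^ (1 - α) = (1 + t) * ((1 + t) ^ α)⁻¹ := by
      rw [Real.rpow_sub hq, Real.rpow_one]; rfl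
    have e4 : (1 + t) ^ (1 - α - 1) = ((1 + t) ^ α)⁻¹ := by
      rw [← Real.rpow_neg hq.le]; congr 1; ring
    simp only [Pi.mul_apply, e1, e2, e3, e4, Real.div_rpow hp.le hq.le, id]
    have hr : ((((1 + t) ^ α : ℝ)) : ℂ) ≠ 0 := by
      exact_mod_cast (Real.rpow_pos_of_pos hq α).ne'
    push_cast
    field_simp
    ring
  · refine (weight_integrable α hα).mul_continuousOn ?_
    rw [Set.uIcc_of_le (by norm_num)]
    exact (ContinuousOn.div (by fun_prop) (by fun_prop) hs).sub
      (ContinuousOn.div (by fun_prop) (by fun_prop) fun t ht => pow_ne_zero 2 (hs t ht))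

/-- Differentiation under the integral sign. The pole `z` has positive distance `δ` to `[-1, 1]`, so
`|x t - z| ≥ δ / 2` for all `x` within `δ / 2` of `s`, which dominates the differentiated integrand. -/
lemma hasDerivAt_cauchy (α : ℝ) (hα : |α| < 1) (z : ℂ)
    (hz : ∀ t : ℝ, t ∈ Set.Icc (-1 : ℝ) 1 → (t : ℂ) ≠ z) (s : ℝ) (hs : s ∈ Set.Icc (0 : ℝ) 1) :
    HasDerivAt (fun s : ℝ => ∫ t in (-1 : ℝ)..1, (((((1 - t) / (1 + t)) ^ α : ℝ)) : ℂ) *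
      (s / (s * t - z)))
      (∫ t in (-1 : ℝ)..1, (((((1 - t) / (1 + t)) ^ α : ℝ)) : ℂ) * (-z / (s * t - z) ^ 2)) s := by
  obtain ⟨t₀, ht₀, hmin⟩ := (isCompact_Icc (a := (-1 : ℝ)) (b := 1)).exists_isMinOn
    (f := fun t : ℝ => ‖(t : ℂ) - z‖) ⟨0, by norm_num⟩ (by fun_prop)
  set δ : ℝ := ‖(t₀ : ℂ) - z‖ with hδ
  have hδ0 : 0 < δ := norm_pos_iff.mpr (sub_ne_zero.mpr (hz t₀ ht₀))
  have hbd : ∀ x ∈ Metric.ball s (δ / 2), ∀ t ∈ Set.Icc (-1 : ℝ) 1,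
      δ / 2 ≤ ‖(x * t - z : ℂ)‖ := by
    intro x hx t ht
    have ha : δ ≤ ‖((s * t : ℝ) : ℂ) - z‖ := hmin (a := s * t)
      ⟨by nlinarith [hs.1, hs.2, ht.1, ht.2], by nlinarith [hs.1, hs.2, ht.1, ht.2]⟩
    have hb : ‖((x - s : ℝ) : ℂ) * t‖ ≤ δ / 2 := by
      rw [norm_mul, Complex.norm_real, Complex.norm_real]
      have h3 : |t| ≤ 1 := abs_le.mpr ht
      have h4 : ‖x - s‖ < δ / 2 := by simpa [Real.dist_eq] using hx
      calc ‖x - s‖ * ‖t‖ ≤ ‖x - s‖ * 1 := by gcongr; exact h3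
        _ ≤ δ / 2 := by linarith
    have hc : ((s * t : ℝ) : ℂ) - z = (x * t - z) - ((x - s : ℝ) : ℂ) * t := by push_cast; ring
    rw [hc] at ha
    linarith [norm_sub_le ((x * t - z : ℂ)) (((x - s : ℝ) : ℂ) * t)]
  have hne : ∀ x ∈ Metric.ball s (δ / 2), ∀ t ∈ Set.Icc (-1 : ℝ) 1, (x * t - z : ℂ) ≠ 0 :=
    fun x hx t ht => norm_pos_iff.mp ((half_pos hδ0).trans_le (hbd x hx t ht))
  have hball := Metric.ball_mem_nhds s (half_pos hδ0)
  have hw := weight_integrable α hα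
  have hF : ∀ x ∈ Metric.ball s (δ / 2), IntervalIntegrable
      (fun t : ℝ => (((((1 - t) / (1 + t)) ^ α : ℝ)) : ℂ) * (x / (x * t - z))) volume (-1) 1 := by
    intro x hx
    refine hw.mul_continuousOn ?_
    rw [Set.uIcc_of_le (by norm_num)]
    exact ContinuousOn.div (by fun_prop) (by fun_prop) (hne x hx)
  have hF' : IntervalIntegrable
      (fun t : ℝ => (((((1 - t) / (1 + t)) ^ α : ℝ)) : ℂ) * (-z / (s * t - z) ^ 2))
      volume (-1) 1 := by
    refine hw.mul_continuousOn ?_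
    rw [Set.uIcc_of_le (by norm_num)]
    exact ContinuousOn.div (by fun_prop) (by fun_prop)
      fun t ht => pow_ne_zero 2 (hne s (mem_of_mem_nhds hball) t ht)
  have hIcc : ∀ t ∈ Set.uIoc (-1 : ℝ) 1, t ∈ Set.Icc (-1 : ℝ) 1 := by
    intro t ht
    rw [Set.uIoc_of_le (by norm_num)] at ht
    exact ⟨ht.1.le, ht.2⟩
  refine (intervalIntegral.hasDerivAt_integral_of_dominated_loc_of_deriv_le
    (F := fun (x t : ℝ) => (((((1 - t) / (1 + t)) ^ α : ℝ)) : ℂ) * (x / (x * t - z)))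
    (F' := fun (x t : ℝ) => (((((1 - t) / (1 + t)) ^ α : ℝ)) : ℂ) * (-z / (x * t - z) ^ 2))
    (bound := fun t => ‖(((((1 - t) / (1 + t)) ^ α : ℝ)) : ℂ)‖ * (‖z‖ / (δ / 2) ^ 2))
    hball ?_ (hF s (mem_of_mem_nhds hball)) hF'.def'.aestronglyMeasurable ?_
    (hw.norm.mul_const _) ?_).2
  · filter_upwards [hball] with x hx
    exact (hF x hx).def'.aestronglyMeasurable
  · refine Filter.Eventually.of_forall fun t ht x hx => ?_
    rw [norm_mul, norm_div, norm_neg, norm_pow]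
    have := hbd x hx t (hIcc t ht)
    gcongr
  · refine Filter.Eventually.of_forall fun t ht x hx => ?_
    have hd := hne x hx t (hIcc t ht)
    have hx1 : HasDerivAt (fun x : ℝ => (x : ℂ)) 1 x := by
      simpa using (hasDerivAt_id x).ofReal_comp
    refine ((hx1.div ((hx1.mul_const (t : ℂ)).sub_const z) hd).const_mul
      ((((((1 - t) / (1 + t)) ^ α : ℝ)) : ℂ))).congr_deriv ?_
    congr 2
    ring

/-- The differential equation for the Cauchy integral of the weight along the ray: `-z` times
`weight_ibp`, scaled by `s`, accounts for the pointwise difference of the two integrands. -/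
lemma cauchy_ode (α : ℝ) (hα : |α| < 1) (z : ℂ) (s : ℝ)
    (hs : ∀ t ∈ Set.Icc (-1 : ℝ) 1, (s * t - z : ℂ) ≠ 0) :
    (z ^ 2 - s ^ 2) *
      ∫ t in (-1 : ℝ)..1, (((((1 - t) / (1 + t)) ^ α : ℝ)) : ℂ) * (-z / (s * t - z) ^ 2) =
    -z * ((∫ t in (-1 : ℝ)..1, (((((1 - t) / (1 + t)) ^ α : ℝ)) : ℂ)) + 2 * α *
      ∫ t in (-1 : ℝ)..1, (((((1 - t) / (1 + t)) ^ α : ℝ)) : ℂ) * (s / (s * t - z))) := by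
  have hw := weight_integrable α hα
  have hi := weight_ibp α hα z s hs
  have hI1 : IntervalIntegrable
      (fun t : ℝ => (((((1 - t) / (1 + t)) ^ α : ℝ)) : ℂ) * (s / (s * t - z))) volume (-1) 1 := by
    refine hw.mul_continuousOn ?_
    rw [Set.uIcc_of_le (by norm_num)]
    exact ContinuousOn.div (by fun_prop) (by fun_prop) hs
  have hI2 : IntervalIntegrable (fun t : ℝ => (((((1 - t) / (1 + t)) ^ α : ℝ)) : ℂ) *
      (-(2 * t + 2 * α) / (s * t - z) - s * (1 - t ^ 2) / (s * t - z) ^ 2)) volume (-1) 1 := by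
    refine hw.mul_continuousOn ?_
    rw [Set.uIcc_of_le (by norm_num)]
    exact (ContinuousOn.div (by fun_prop) (by fun_prop) hs).sub
      (ContinuousOn.div (by fun_prop) (by fun_prop) fun t ht => pow_ne_zero 2 (hs t ht))
  -- The zero integral of `weight_ibp` is added on the right; the integrands then agree pointwise.
  rw [← add_zero (_ + _), ← mul_zero (s : ℂ), ← hi,
    ← intervalIntegral.integral_const_mul, ← intervalIntegral.integral_const_mul,
    ← intervalIntegral.integral_const_mul, ← intervalIntegral.integral_add hw (hI1.const_mul _),
    ← intervalIntegral.integral_add (hw.add (hI1.const_mul _)) (hI2.const_mul _),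
    ← intervalIntegral.integral_const_mul]
  refine intervalIntegral.integral_congr fun t ht => ?_
  rw [Set.uIcc_of_le (by norm_num)] at ht
  have hd := hs t ht
  field_simp
  ring

/-- If `(z - s) / (z + s) = -r` with `r ≥ 0`, then `z = s (1 - r) / (1 + r)` lies in `[-1, 1]`. -/
lemma mobius_mem_slitPlane (z : ℂ) (hz : ∀ t : ℝ, t ∈ Set.Icc (-1 : ℝ) 1 → (t : ℂ) ≠ z)
    (s : ℝ) (hs : s ∈ Set.Icc (0 : ℝ) 1) : (z - s) / (z + s) ∈ Complex.slitPlane := by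
  obtain ⟨hs0, hs1⟩ := hs
  have hzs : z + s ≠ 0 := by
    intro h
    refine hz (-s) ⟨by linarith, by linarith⟩ ?_
    push_cast
    linear_combination -h
  by_contra hn
  rw [Complex.mem_slitPlane_iff, not_or, not_lt, not_not] at hn
  obtain ⟨hre, him⟩ := hn
  set w := (z - s) / (z + s) with hw
  set r : ℝ := -w.re with hr
  have hr0 : 0 ≤ r := by linarith
  have hwr : w = -(r : ℂ) := by
    apply Complex.ext <;> simp [hr, him]
  rw [hw, div_eq_iff hzs] at hwr
  have h1r : (1 + r : ℂ) ≠ 0 := by exact_mod_cast (by linarith : 1 + r ≠ 0)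
  refine hz (s * (1 - r) / (1 + r)) ⟨?_, ?_⟩ ?_
  · rw [le_div_iff₀ (by linarith)]; nlinarith
  · rw [div_le_iff₀ (by linarith)]; nlinarith
  · push_cast
    rw [div_eq_iff h1r]
    linear_combination -hwr

theorem stmt_8 (α : ℝ) (hα : |α| < 1) (z : ℂ)
    (hz : ∀ t : ℝ, t ∈ Set.Icc (-1 : ℝ) 1 → (t : ℂ) ≠ z) :
    ((z - 1) / (z + 1)) ^ (α : ℂ) =
      1 + ((Real.sin (α * Real.pi) / Real.pi : ℝ) : ℂ) *
        ∫ t in (-1 : ℝ)..1, ((((1 - t) / (1 + t)) ^ α : ℝ) : ℂ) / ((t : ℂ) - z) := by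
  have hne : ∀ s ∈ Set.Icc (0 : ℝ) 1, ∀ t ∈ Set.Icc (-1 : ℝ) 1, (s * t - z : ℂ) ≠ 0 := by
    intro s hs t ht
    have := hz (s * t)
      ⟨by nlinarith [hs.1, hs.2, ht.1, ht.2], by nlinarith [hs.1, hs.2, ht.1, ht.2]⟩
    rw [sub_ne_zero]
    exact_mod_cast this
  set c : ℂ := ((Real.sin (α * Real.pi) / Real.pi : ℝ) : ℂ) with hc
  set g : ℝ → ℂ := fun s => 1 + c * ∫ t in (-1 : ℝ)..1,
    (((((1 - t) / (1 + t)) ^ α : ℝ)) : ℂ) * (s / (s * t - z)) with hg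
  set w : ℝ → ℂ := fun s => (z - s) / (z + s) with hw
  have hz0 : z ≠ 0 := by
    have := hz 0 (by norm_num)
    simpa using this.symm
  have hderiv : ∀ s ∈ Set.Icc (0 : ℝ) 1,
      HasDerivAt (fun s => g s * Complex.exp (-α * Complex.log (w s))) 0 s := by
    intro s hs
    have hws := mobius_mem_slitPlane z hz s hs
    have hw0 : (z - s) / (z + s) ≠ 0 := Complex.slitPlane_ne_zero hws
    have hm : z - s ≠ 0 := fun h => hw0 (by rw [h, zero_div])
    have hp : z + s ≠ 0 := fun h => hw0 (by rw [h, div_zero])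
    have hx1 : HasDerivAt (fun x : ℝ => (x : ℂ)) 1 s := by
      simpa using (hasDerivAt_id s).ofReal_comp
    have hwd := ((hx1.const_sub z).div (hx1.const_add z) hp)
    have hgd := ((hasDerivAt_cauchy α hα z hz s hs).const_mul c).const_add 1
    have hE : HasDerivAt (fun x : ℝ => Complex.exp (-α * Complex.log (w x)))
        (Complex.exp (-α * Complex.log (w s)) *
          (-α * ((-1 * (z + s) - (z - s) * 1) / (z + s) ^ 2 / ((z - s) / (z + s))))) s :=
      ((hwd.clog_real hws).const_mul (-α : ℂ)).cexp
    have hode := cauchy_ode α hα z s (hne s hs)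
    have hint := weight_integral α hα
    refine (hgd.mul hE).congr_deriv ?_
    set G' := ∫ t in (-1 : ℝ)..1,
      (((((1 - t) / (1 + t)) ^ α : ℝ)) : ℂ) * (-z / (s * t - z) ^ 2)
    set G := ∫ t in (-1 : ℝ)..1, (((((1 - t) / (1 + t)) ^ α : ℝ)) : ℂ) * (s / (s * t - z))
    set J := ∫ t in (-1 : ℝ)..1, (((((1 - t) / (1 + t)) ^ α : ℝ)) : ℂ)
    have hG' : c * G' = -2 * α * z * (1 + c * G) / ((z - s) * (z + s)) := by
      rw [eq_div_iff (mul_ne_zero hm hp)]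
      linear_combination c * hode - z * hint
    rw [hG']
    field_simp
    ring
  -- At `s = 0` the conserved quantity is `1 * exp 0`; comparing with `s = 1` gives the claim.
  have hconst := constant_of_has_deriv_right_zero (a := (0 : ℝ)) (b := 1)
    (fun s hs => (hderiv s hs).continuousAt.continuousWithinAt)
    (fun s hs => (hderiv s ⟨hs.1, hs.2.le⟩).hasDerivWithinAt) 1 (by norm_num)
  have hw1 : (z - 1) / (z + 1) ≠ 0 := by
    have := Complex.slitPlane_ne_zero (mobius_mem_slitPlane z hz 1 (by norm_num))
    simpa using this
  simp only [hg, hw] at hconst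
  simp only [Complex.ofReal_one, Complex.ofReal_zero, zero_div, mul_zero, sub_zero, add_zero,
    div_self hz0, Complex.log_one, Complex.exp_zero, mul_one, one_mul,
    intervalIntegral.integral_zero, neg_mul, Complex.exp_neg] at hconst
  rw [mul_inv_eq_one₀ (Complex.exp_ne_zero _)] at hconst
  rw [Complex.cpow_def_of_ne_zero hw1, mul_comm, ← hconst]
  simp only [mul_one_div]
end

section
/- Let A be a linear relation on a complex vector space V, and w₁, w₂ ∈ ℂ with w₁ ≠ w₂. If the composition (w₁ - A)⁻¹(w₂ - A)⁻¹ is single-valued at u (i.e. there exists a unique y with (y,u) in the composed relation), then both (w₁ - A)⁻¹u and (w₂ - A)⁻¹u are single-valued, and (w₁ - A)⁻¹(w₂ - A)⁻¹u = (w₂ - w₁)⁻¹((w₁ - A)⁻¹u - (w₂ - A)⁻¹u). -/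
/-!
Write `R w` for `A.resolvent w`. If `v ∈ R w₂ u` and `y ∈ R w₁ v`, then `v + (w₂ - w₁) • y ∈ R w₁ u`,
which gives existence and the resolvent identity. For uniqueness, it suffices that `R w₁ 0` and
`R w₂ 0` are trivial. An element `k` of `R w₁ 0` can be added to `y` without leaving the composition
at `u`. An element `k` of `R w₂ 0` satisfies `(w₂ • k, k) ∈ A`, hence `(w₁ - w₂)⁻¹ • k ∈ R w₁ k`, and
this multiple of `k` again can be added to `y`.
-/

variable {V : Type*} [AddCommGroup V] [Module ℂ V]

/-- A multivalued linear operator (linear relation) on `V`. -/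
abbrev LinRel (V : Type*) [AddCommGroup V] [Module ℂ V] := Submodule ℂ (V × V)

/-- `A u` makes sense with value `y`. -/
def LinRel.MakesSense (A : LinRel V) (u y : V) : Prop :=
  (y, u) ∈ A ∧ ∀ y', (y', u) ∈ A → y' = y

/-- The resolvent relation `(w - A)⁻¹`: `(y, u) ∈ resolvent A w ↔ (w • y - u, y) ∈ A`. -/
def LinRel.resolvent (A : LinRel V) (w : ℂ) : LinRel V :=
  A.comap ((w • LinearMap.fst ℂ V V - LinearMap.snd ℂ V V).prod (LinearMap.fst ℂ V V))

/-- Relational composition of linear relations: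
`(z, x) ∈ B.comp A ↔ ∃ y, (z, y) ∈ B ∧ (y, x) ∈ A`. -/
def LinRel.comp (B A : LinRel V) : LinRel V where
  carrier := {p | ∃ y, (p.1, y) ∈ B ∧ (y, p.2) ∈ A}
  add_mem' := by
    rintro ⟨z₁, x₁⟩ ⟨z₂, x₂⟩ ⟨y₁, hB₁, hA₁⟩ ⟨y₂, hB₂, hA₂⟩
    exact ⟨y₁ + y₂, B.add_mem hB₁ hB₂, A.add_mem hA₁ hA₂⟩
  zero_mem' := ⟨0, B.zero_mem, A.zero_mem⟩
  smul_mem' := by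
    rintro c ⟨z, x⟩ ⟨y, hB, hA⟩
    exact ⟨c • y, B.smul_mem c hB, A.smul_mem c hA⟩

theorem LinRel.mem_resolvent (A : LinRel V) (w : ℂ) (y u : V) :
    (y, u) ∈ A.resolvent w ↔ (w • y - u, y) ∈ A := Iff.rfl

theorem LinRel.makesSense_of_ker (B : LinRel V) {u y : V} (hy : (y, u) ∈ B)
    (hB : ∀ k, (k, (0 : V)) ∈ B → k = 0) : B.MakesSense u y := by
  refine ⟨hy, fun y' hy' => sub_eq_zero.mp (hB _ ?_)⟩
  simpa using B.sub_mem hy' hy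

theorem stmt_16 (A : LinRel V) (w₁ w₂ : ℂ) (hw : w₁ ≠ w₂) (u y : V)
    (h : ((A.resolvent w₁).comp (A.resolvent w₂)).MakesSense u y) :
    ∃ u₁ u₂ : V, (A.resolvent w₁).MakesSense u u₁ ∧ (A.resolvent w₂).MakesSense u u₂ ∧
      y = (w₂ - w₁)⁻¹ • (u₁ - u₂) := by
  obtain ⟨⟨v, hyv, hvu⟩, huniq⟩ := h
  have hd : w₂ - w₁ ≠ 0 := sub_ne_zero.mpr hw.symm
  have hd' : w₁ - w₂ ≠ 0 := sub_ne_zero.mpr hw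
  have hcomp : ∀ z, (z, (0 : V)) ∈ (A.resolvent w₁).comp (A.resolvent w₂) → z = 0 := by
    intro z hz
    have hsum := add_mem (show (y, u) ∈ (A.resolvent w₁).comp (A.resolvent w₂) from
      ⟨v, hyv, hvu⟩) hz
    have := huniq (y + z) (by simpa using hsum)
    simpa using this
  refine ⟨v + (w₂ - w₁) • y, v, LinRel.makesSense_of_ker _ ?_ ?_,
    LinRel.makesSense_of_ker _ hvu ?_, ?_⟩
  · rw [LinRel.mem_resolvent]
    convert A.add_mem (A.smul_mem (w₂ - w₁) hyv) hvu using 1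
    ext
    · simp
      module
    · simp [add_comm]
  · exact fun k hk => hcomp k ⟨0, hk, zero_mem _⟩
  · intro k hk
    have hmem : ((w₁ - w₂)⁻¹ • k, k) ∈ A.resolvent w₁ := by
      rw [LinRel.mem_resolvent] at hk ⊢
      convert A.smul_mem (w₁ - w₂)⁻¹ hk using 1
      ext
      · simp only [sub_zero, Prod.smul_mk]
        match_scalars
        field_simp
        ring
      · rfl
    have hz := hcomp _ ⟨k, hmem, hk⟩
    exact (smul_eq_zero.mp hz).resolve_left (inv_ne_zero hd')
  · simp [smul_smul, hd]
end
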